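/- Fix ρ ∈ (0,1) and α ∈ (0,1). Let (α_n) be a sequence in (0,1) with n·α_n → α and let c_n be defined by Φ(−c_n) = α_n. Then n·c_n·∫_{A_n} Φ(d(ρ,c_n,z))^{n−1}·φ(d(ρ,c_n,z))·φ(z) dz → 0 as n → ∞, where A_n = { z ∈ ℝ : Φ(−d(ρ,c_n,z)) < 1/(n·(log n)³) }. -/

import Mathlib

open MeasureTheory Filter

/-- The standard normal density. -/
noncomputable def phi (x : ℝ) : ℝ := (Real.sqrt (2 * Real.pi))⁻¹ * Real.exp (-x ^ 2 / 2)

/-- The standard normal cumulative distribution function. -/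
noncomputable def Phi (x : ℝ) : ℝ := ∫ t in Set.Iic x, phi t

/-- d(ρ,c,z) = (c + √ρ·z)/√(1−ρ). -/
noncomputable def dd (ρ c z : ℝ) : ℝ := (c + Real.sqrt ρ * z) / Real.sqrt (1 - ρ)

/-- G(ρ,c,z) = (c + z/√ρ)/(2(1−ρ)^{3/2}). -/
noncomputable def G (ρ c z : ℝ) : ℝ :=
  (c + z / Real.sqrt ρ) / (2 * (1 - ρ) ^ ((3 : ℝ) / 2))

/-- H_n(ρ,c) = ∫ Φ(d(ρ,c,z))^n φ(z) dz. -/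
noncomputable def Hn (n : ℕ) (ρ c : ℝ) : ℝ := ∫ z : ℝ, (Phi (dd ρ c z)) ^ n * phi z

/-!
On `A_n` the factor `Φ ^ (n - 1)` and the second density are at most `1`. Substituting
`y = -d(ρ, c_n, z)` in what remains leaves `√(1 - ρ) / √ρ` times `P(Φ(Y) < t_n)` for `Y` standard
normal and `t_n = 1 / (n (log n)³)`, which is at most `t_n` because `Φ(Y)` is uniform. So the whole
expression is `O(c_n / (log n)³)`, while `n Φ(-c_n) → α > 0` and the Chernoff bound
`Φ(-x) ≤ exp (-x² / 2)` give `c_n = O(√(log n))`.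
-/

open ProbabilityTheory Asymptotics Topology

theorem measure_setOf_measure_Iic_lt_le {α : Type*} [LinearOrder α] [TopologicalSpace α]
    [OrderTopology α] [SecondCountableTopology α] [MeasurableSpace α] [BorelSpace α]
    (μ : Measure α) [μ.InnerRegular] (t : ENNReal) : μ {x | μ (Set.Iic x) < t} ≤ t := by
  have lower : IsLowerSet {x | μ (Set.Iic x) < t} := fun x y hyx hx =>
    (measure_mono (Set.Iic_subset_Iic.2 hyx)).trans_lt hx
  rw [lower.ordConnected.measurableSet.measure_eq_iSup_isCompact μ]
  refine iSup₂_le fun K hK => iSup_le fun hKcompact => ?_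
  obtain rfl | hne := K.eq_empty_or_nonempty
  · simp only [measure_empty, zero_le]
  · obtain ⟨m, hmK, hm⟩ := hKcompact.exists_isGreatest hne
    exact (measure_mono hm).trans (hK hmK).le

theorem isLittleO_sqrt_pow_atTop {k : ℕ} (hk : k ≠ 0) :
    Real.sqrt =o[atTop] fun x : ℝ => x ^ k := by
  have h := (isLittleO_pow_pow_atTop_of_lt (𝕜 := ℝ) (by lia : 1 < 2 * k)).comp_tendsto
    Real.tendsto_sqrt_atTop
  refine h.congr' (.of_forall fun x => pow_one _) ?_
  filter_upwards [eventually_ge_atTop 0] with x hx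
  rw [Function.comp_apply, pow_mul, Real.sq_sqrt hx]

theorem phi_eq_gaussianPDFReal : phi = gaussianPDFReal 0 1 := by
  funext x
  simp [phi, gaussianPDFReal]

theorem integrable_phi : Integrable phi :=
  phi_eq_gaussianPDFReal ▸ integrable_gaussianPDFReal 0 1

theorem phi_nonneg (x : ℝ) : 0 ≤ phi x := by
  unfold phi
  positivity

theorem phi_le_one (x : ℝ) : phi x ≤ 1 := by
  refine mul_le_one₀ (inv_le_one_of_one_le₀ ?_) (Real.exp_nonneg _) (Real.exp_le_one_iff.2 ?_)
  · rw [Real.one_le_sqrt]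
    linarith [Real.pi_gt_three]
  · linarith [sq_nonneg x]

theorem phi_neg (x : ℝ) : phi (-x) = phi x := by
  simp only [phi, neg_sq]

theorem setIntegral_phi (s : Set ℝ) : ∫ x in s, phi x = (gaussianReal 0 1).real s := by
  rw [phi_eq_gaussianPDFReal, measureReal_def, gaussianReal_apply_eq_integral 0 one_ne_zero,
    ENNReal.toReal_ofReal (integral_nonneg (gaussianPDFReal_nonneg 0 1))]

theorem Phi_eq_gaussianReal_real_Iic (x : ℝ) : Phi x = (gaussianReal 0 1).real (Set.Iic x) :=
  setIntegral_phi _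

theorem Phi_mono : Monotone Phi := fun x y hxy => by
  simpa only [Phi_eq_gaussianReal_real_Iic] using measureReal_mono (Set.Iic_subset_Iic.2 hxy)

theorem Phi_pos (x : ℝ) : 0 < Phi x := by
  rw [Phi_eq_gaussianReal_real_Iic, measureReal_def]
  refine ENNReal.toReal_pos (fun h => ?_) (measure_ne_top _ _)
  simpa using gaussianReal_absolutelyContinuous' 0 one_ne_zero h

theorem Phi_le_one (x : ℝ) : Phi x ≤ 1 :=
  Phi_eq_gaussianReal_real_Iic x ▸ measureReal_le_one

theorem Phi_le_exp_neg_sq_div_two {x : ℝ} (hx : x ≤ 0) : Phi x ≤ Real.exp (-x ^ 2 / 2) := by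
  have chernoff := measure_le_le_exp_mul_mgf (X := id) x hx
    (integrable_exp_mul_gaussianReal (μ := 0) (v := 1) x)
  rw [mgf_id_gaussianReal, ← Real.exp_add] at chernoff
  rw [Phi_eq_gaussianReal_real_Iic]
  refine chernoff.trans_eq (congrArg Real.exp ?_)
  push_cast
  ring

theorem sq_le_neg_two_mul_log_Phi_neg {x : ℝ} (hx : 0 ≤ x) :
    x ^ 2 ≤ -2 * Real.log (Phi (-x)) := by
  have h := (Real.log_le_iff_le_exp (Phi_pos _)).2
    (Phi_le_exp_neg_sq_div_two (neg_nonpos.2 hx))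
  rw [neg_sq] at h
  linarith

theorem tendsto_atTop_of_tendsto_Phi_neg {ι : Type*} {l : Filter ι} {c : ι → ℝ}
    (h : Tendsto (fun i => Phi (-c i)) l (𝓝 0)) : Tendsto c l atTop := by
  refine tendsto_atTop.2 fun M => ?_
  filter_upwards [h.eventually_lt_const (Phi_pos (-M))] with i hi
  exact (neg_lt_neg_iff.1 (Phi_mono.reflect_lt hi)).le

theorem isBigO_sqrt_log_of_tendsto_mul_Phi_neg {α : ℝ} (hα : 0 < α) {c : ℕ → ℝ}
    (h : Tendsto (fun n : ℕ => n * Phi (-c n)) atTop (𝓝 α)) :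
    c =O[atTop] fun n : ℕ => √(Real.log n) := by
  have Phi_tendsto : Tendsto (fun n => Phi (-c n)) atTop (𝓝 0) := by
    refine (h.div_atTop tendsto_natCast_atTop_atTop).congr' ?_
    filter_upwards [eventually_ne_atTop 0] with n hn
    exact mul_div_cancel_left₀ _ (Nat.cast_ne_zero.2 hn)
  have log_tendsto := Real.tendsto_log_atTop.comp (tendsto_natCast_atTop_atTop (R := ℝ))
  refine IsBigO.of_bound 2 ?_
  filter_upwards [(tendsto_atTop_of_tendsto_Phi_neg Phi_tendsto).eventually_ge_atTop 0,
    h.eventually_const_lt (half_lt_self hα), eventually_gt_atTop 0,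
    log_tendsto.eventually_ge_atTop (-Real.log (α / 2))] with n hc hlower hn hlog
  have log_lower : Real.log (α / 2) ≤ Real.log n + Real.log (Phi (-c n)) := by
    rw [← Real.log_mul (by positivity) (Phi_pos _).ne']
    exact Real.log_le_log (half_pos hα) hlower.le
  have hsq : c n ^ 2 ≤ 2 ^ 2 * Real.log n := by
    simp only [Function.comp_apply] at hlog
    linarith [sq_le_neg_two_mul_log_Phi_neg hc]
  rw [Real.norm_of_nonneg (Real.sqrt_nonneg _), Real.norm_eq_abs]
  refine (Real.abs_le_sqrt hsq).trans_eq ?_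
  rw [Real.sqrt_mul (by positivity), Real.sqrt_sq zero_le_two]

theorem setIntegral_phi_setOf_Phi_lt_le {t : ℝ} (ht : 0 ≤ t) :
    ∫ y in {y | Phi y < t}, phi y ≤ t := by
  have hset : {y | Phi y < t} = {y | gaussianReal 0 1 (Set.Iic y) < ENNReal.ofReal t} := by
    ext y
    simp only [Set.mem_ofPred_eq, Phi_eq_gaussianReal_real_Iic, measureReal_def]
    exact (ENNReal.lt_ofReal_iff_toReal_lt (measure_ne_top _ _)).symm
  rw [setIntegral_phi, hset]
  exact ENNReal.toReal_le_of_le_ofReal ht (measure_setOf_measure_Iic_lt_le _ _)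

theorem measurableSet_setOf_Phi_lt (t : ℝ) : MeasurableSet {y | Phi y < t} :=
  measurableSet_lt Phi_mono.measurable measurable_const

theorem measurable_dd (ρ c : ℝ) : Measurable (dd ρ c) := by
  unfold dd
  fun_prop

theorem neg_dd_eq (ρ c z : ℝ) : -dd ρ c z = -(√ρ / √(1 - ρ)) * z + -(c / √(1 - ρ)) := by
  unfold dd
  ring

theorem integral_comp_neg_dd {E : Type*} [NormedAddCommGroup E] [NormedSpace ℝ E] (ρ c : ℝ)
    (g : ℝ → E) :
    ∫ z, g (-dd ρ c z) = (√(1 - ρ) / √ρ) • ∫ y, g y := by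
  simp only [neg_dd_eq]
  rw [Measure.integral_comp_mul_left (fun y => g (y + -(c / √(1 - ρ)))),
    integral_add_right_eq_self, inv_neg, abs_neg, inv_div, abs_of_nonneg (by positivity)]

theorem integrable_comp_neg_dd {E : Type*} [NormedAddCommGroup E] {ρ : ℝ}
    (hρ : ρ ∈ Set.Ioo (0 : ℝ) 1) (c : ℝ) {g : ℝ → E} (hg : Integrable g) :
    Integrable fun z => g (-dd ρ c z) := by
  simp only [neg_dd_eq]
  have hslope : -(√ρ / √(1 - ρ)) ≠ 0 :=
    neg_ne_zero.2 (div_pos (Real.sqrt_pos.2 hρ.1) (Real.sqrt_pos.2 (sub_pos.2 hρ.2))).ne'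
  exact (hg.comp_add_right _).comp_mul_left' hslope

theorem setIntegral_phi_dd_le (ρ c : ℝ) {t : ℝ} (ht : 0 ≤ t) :
    ∫ z in {z | Phi (-dd ρ c z) < t}, phi (dd ρ c z) ≤ √(1 - ρ) / √ρ * t := by
  have hS : MeasurableSet {y | Phi y < t} := measurableSet_setOf_Phi_lt t
  calc ∫ z in {z | Phi (-dd ρ c z) < t}, phi (dd ρ c z)
      = ∫ z, {y | Phi y < t}.indicator phi (-dd ρ c z) := by
        have hpre : MeasurableSet {z | Phi (-dd ρ c z) < t} := (measurable_dd ρ c).neg hS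
        rw [← integral_indicator hpre]
        simp only [Set.indicator, Set.mem_ofPred_eq, phi_neg]
    _ = √(1 - ρ) / √ρ * ∫ y in {y | Phi y < t}, phi y := by
        rw [integral_comp_neg_dd, integral_indicator hS, smul_eq_mul]
    _ ≤ √(1 - ρ) / √ρ * t := by
        gcongr
        exact setIntegral_phi_setOf_Phi_lt_le ht

theorem norm_setIntegral_Phi_pow_mul_phi_mul_phi_le {ρ : ℝ} (hρ : ρ ∈ Set.Ioo (0 : ℝ) 1) (c : ℝ)
    {t : ℝ} (ht : 0 ≤ t) (m : ℕ) :
    ‖∫ z in {z | Phi (-dd ρ c z) < t}, Phi (dd ρ c z) ^ m * phi (dd ρ c z) * phi z‖ ≤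
      √(1 - ρ) / √ρ * t := by
  have hint : Integrable fun z => phi (dd ρ c z) := by
    simpa only [phi_neg] using integrable_comp_neg_dd hρ c integrable_phi
  refine (norm_integral_le_of_norm_le hint.integrableOn (.of_forall fun z => ?_)).trans
    (setIntegral_phi_dd_le ρ c ht)
  have hPhi := (Phi_pos (dd ρ c z)).le
  have hphi := phi_nonneg (dd ρ c z)
  rw [Real.norm_of_nonneg (by have := phi_nonneg z; positivity)]
  calc Phi (dd ρ c z) ^ m * phi (dd ρ c z) * phi z
      ≤ 1 * phi (dd ρ c z) * 1 := by
        gcongr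
        · exact phi_nonneg z
        · exact pow_le_one₀ hPhi (Phi_le_one _)
        · exact phi_le_one z
    _ = phi (dd ρ c z) := by ring

theorem integral_region_An_tendsto_zero_general {ρ : ℝ} (hρ : ρ ∈ Set.Ioo (0 : ℝ) 1) {c : ℕ → ℝ}
    (hc : c =o[atTop] fun n : ℕ => Real.log n ^ 3) :
    Tendsto (fun n : ℕ =>
        (n : ℝ) * c n *
          ∫ z in {z : ℝ | Phi (-(dd ρ (c n) z)) < 1 / ((n : ℝ) * (Real.log n) ^ 3)},
            (Phi (dd ρ (c n) z)) ^ (n - 1) * phi (dd ρ (c n) z) * phi z)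
      atTop (𝓝 0) := by
  have hlim : Tendsto (fun n : ℕ => √(1 - ρ) / √ρ * ‖c n / Real.log n ^ 3‖) atTop (𝓝 0) := by
    simpa only [norm_zero, mul_zero] using hc.tendsto_div_nhds_zero.norm.const_mul (√(1 - ρ) / √ρ)
  refine squeeze_zero_norm' ?_ hlim
  filter_upwards [eventually_ne_atTop 0] with n hn
  have hlog : 0 ≤ Real.log n ^ 3 := pow_nonneg (Real.log_natCast_nonneg n) 3
  rw [norm_mul]
  calc _ ≤ ‖n * c n‖ * (√(1 - ρ) / √ρ * (1 / (n * Real.log n ^ 3))) := by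
        gcongr
        exact norm_setIntegral_Phi_pow_mul_phi_mul_phi_le hρ (c n) (by positivity) (n - 1)
    _ = √(1 - ρ) / √ρ * ‖c n / Real.log n ^ 3‖ := by
        rw [norm_mul, norm_div, Real.norm_natCast, Real.norm_of_nonneg hlog]
        field_simp

theorem integral_region_An_tendsto_zero
    (ρ : ℝ) (hρ : ρ ∈ Set.Ioo (0:ℝ) 1) (α : ℝ) (hα : α ∈ Set.Ioo (0:ℝ) 1)
    (αseq : ℕ → ℝ) (hαseq : ∀ n, αseq n ∈ Set.Ioo (0:ℝ) 1)
    (hlim : Tendsto (fun n : ℕ => (n : ℝ) * αseq n) atTop (nhds α))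
    (c : ℕ → ℝ) (hc : ∀ n, Phi (-(c n)) = αseq n) :
    Tendsto (fun n : ℕ =>
        (n : ℝ) * c n *
          ∫ z in {z : ℝ | Phi (-(dd ρ (c n) z)) < 1 / ((n : ℝ) * (Real.log n) ^ 3)},
            (Phi (dd ρ (c n) z)) ^ (n - 1) * phi (dd ρ (c n) z) * phi z)
      atTop (nhds 0) :=
  integral_region_An_tendsto_zero_general hρ <|
    (isBigO_sqrt_log_of_tendsto_mul_Phi_neg hα.1 (by simpa only [hc] using hlim)).trans_isLittleO <|
      (isLittleO_sqrt_pow_atTop three_ne_zero).comp_tendsto <|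
        Real.tendsto_log_atTop.comp tendsto_natCast_atTop_atTop
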